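/- Let p be an odd prime, r ≥ 2 an integer, and K an abelian number field of conductor p^r, of degree n over ℚ and with D_K the absolute value of the discriminant of K. Then M(K) ≤ (3^{-2/3})^n · √(D_K). -/

import Mathlib

open NumberField

/-- The Euclidean minimum of a number field `K`:
`M(K) = sup_{x ∈ K} inf_{c ∈ O_K} |N_{K/ℚ}(x − c)|`. -/
noncomputable def euclideanMinimum (K : Type*) [Field K] [NumberField K] : ℝ :=
  ⨆ x : K, ⨅ c : 𝓞 K, |((Algebra.norm ℚ (x - (c : K)) : ℚ) : ℝ)|

/-- A number field `K` has conductor `f` if `f` is the smallest positive integer such that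
`K` embeds into the `f`-th cyclotomic field `ℚ(ζ_f)`.  (Such a `K` is automatically an
abelian extension of `ℚ`.) -/
def HasConductor (K : Type*) [Field K] [NumberField K] (f : ℕ+) : Prop :=
  Nonempty (K →ₐ[ℚ] CyclotomicField f ℚ) ∧
    ∀ m : ℕ+, Nonempty (K →ₐ[ℚ] CyclotomicField m ℚ) → f ≤ m

open Finset

/-!
Let `L = ℚ(ζ)` with `ζ` of order `q = p ^ r`, and `m = [L : K]`. Because `K` does not embed into
`ℚ(ζ ^ p)` and `Gal(L/ℚ)` is cyclic, `p ∤ m`; hence `m ∣ p - 1`, and `a - 1` is a unit for every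
`a ≠ 1` in the image of `Gal(L/K)` in `(ℤ/q)ˣ`.

Write `M x = ∑ n a * ζ ^ a` with integers `n a` invariant under `Gal(L/K)`. Adding `t` to all `n a`
does not change the sum, and reducing the `n a - t` modulo `M` changes `x` by an integer of `K`.
Averaging `∑ |σ (M (x - c))| ^ 2` over `t` modulo `M` produces a `c` for which the mean of
`|σ (x - c)| ^ 2` is at most `(q - (m - 1)) / 8`: the trace form is a sum of squares of differences
of residues over pairs congruent modulo `q / p`, each of mean at most `M ^ 2 / 4`, and the `m - 1`
subtracted accounts for pairs in one orbit of `Gal(L/K)`, whose difference vanishes. The inequality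
of the means turns this into a bound for the norm.

Finally `f'(ζ)`, `f` the minimal polynomial of `ζ` over `K`, is a product of `m - 1` elements of
norm `±p`. So the relative different has norm at most `p ^ (m - 1)`, which bounds the discriminant
of `K` from below in terms of that of `L`.
-/

section Numerics

theorem pow_le_pow_of_mul_le_mul {a b : ℝ} {c d x y : ℕ} (ha : 1 ≤ a) (hb : 0 ≤ b) (hc : c ≠ 0)
    (hab : a ^ d ≤ b ^ c) (hxy : c * x ≤ d * y) : a ^ x ≤ b ^ y := by
  refine le_of_pow_le_pow_left₀ hc (pow_nonneg hb y) ?_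
  calc (a ^ x) ^ c = a ^ (c * x) := by rw [← pow_mul, mul_comm]
    _ ≤ a ^ (d * y) := pow_le_pow_right₀ ha hxy
    _ = (a ^ d) ^ y := pow_mul a d y
    _ ≤ (b ^ c) ^ y := by gcongr
    _ = (b ^ y) ^ c := by rw [← pow_mul, ← pow_mul, mul_comm]

theorem pow_six_le_pow {p : ℕ} (hp : 7 ≤ p) : (p : ℝ) ^ 6 ≤ (512 / 81) ^ p := by
  induction p, hp using Nat.le_induction with
  | base => norm_num
  | succ n hn ih =>
    have hn' : (7 : ℝ) ≤ n := by exact_mod_cast hn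
    calc ((n + 1 : ℕ) : ℝ) ^ 6 ≤ (8 / 7 * n) ^ 6 := by gcongr; push_cast; linarith
      _ ≤ 512 / 81 * (n : ℝ) ^ 6 := by rw [mul_pow]; gcongr; norm_num
      _ ≤ 512 / 81 * (512 / 81) ^ n := by gcongr
      _ = (512 / 81) ^ (n + 1) := by ring

theorem prime_pow_le_pow {p k u : ℕ} (hp : p.Prime) (hodd : Odd p) (hk : k ≠ 0) (hu : u ≤ p - 2)
    (hpk : 7 ≤ p ∨ 2 ≤ k) :
    (p : ℝ) ^ (3 * (u + p ^ k)) ≤ (512 / 81) ^ (p ^ k * (p - 1)) := by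
  obtain ⟨j, rfl⟩ := Nat.exists_eq_succ_of_ne_zero hk
  have hp1 : (1 : ℝ) ≤ (p : ℝ) ^ 3 := one_le_pow₀ (by exact_mod_cast hp.one_le)
  rw [pow_mul, mul_comm (p ^ _) (p - 1), pow_mul (512 / 81 : ℝ)]
  rcases le_or_gt 7 p with h7 | h7
  · refine pow_le_pow_of_mul_le_mul (c := p) (d := 2 * (p - 1)) hp1 (by positivity) hp.ne_zero ?_ ?_
    · calc ((p : ℝ) ^ 3) ^ (2 * (p - 1)) = ((p : ℝ) ^ 6) ^ (p - 1) := by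
            rw [← pow_mul, ← pow_mul]; ring_nf
        _ ≤ ((512 / 81) ^ p) ^ (p - 1) := by gcongr; exact pow_six_le_pow h7
        _ = ((512 / 81) ^ (p - 1)) ^ p := by rw [← pow_mul, ← pow_mul, mul_comm]
    · have hpos : 0 < p ^ j := pow_pos hp.pos j
      obtain ⟨s, rfl⟩ : ∃ s, p = s + 2 := ⟨p - 2, by omega⟩
      have : u ≤ (s + 2) ^ j * s := hu.trans (Nat.le_mul_of_pos_left _ hpos)
      simp only [pow_succ, show s + 2 - 1 = s + 1 by omega]
      nlinarith
  · obtain ⟨i, rfl⟩ : ∃ i, j = i + 1 := ⟨j - 1, by omega⟩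
    have hpos : 0 < p ^ i := pow_pos hp.pos i
    have : p = 3 ∨ p = 5 := by interval_cases p <;> simp_all +decide
    rcases this with rfl | rfl
    · refine pow_le_pow_of_mul_le_mul (c := 9) (d := 10) hp1 (by positivity) (by norm_num)
        (by norm_num) ?_
      rw [pow_succ, pow_succ]; omega
    · refine pow_le_pow_of_mul_le_mul (c := 2) (d := 3) hp1 (by positivity) (by norm_num)
        (by norm_num) ?_
      rw [pow_succ, pow_succ]; omega

-- Equality holds for `p ^ (k + 1) = 9` and `u = 1`, that is, for the real subfield of `ℚ(ζ₉)`;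
-- this is where the constant `512 / 81 = (8 * 3 ^ (-4 / 3)) ^ 3` comes from.
theorem sub_pow_mul_prime_pow_le {p k u : ℕ} (hp : p.Prime) (hodd : Odd p) (hk : k ≠ 0)
    (hu : u ≤ p - 2) :
    ((p : ℝ) ^ (k + 1) - u) ^ (3 * (p ^ k * (p - 1))) * (p : ℝ) ^ (3 * (u + p ^ k)) ≤
      ((p : ℝ) ^ (k + 1)) ^ (3 * (p ^ k * (p - 1))) * (512 / 81) ^ (p ^ k * (p - 1)) := by
  by_cases hpk : 7 ≤ p ∨ 2 ≤ k
  · have hup : u ≤ p ^ (k + 1) := by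
      have : p ≤ p ^ (k + 1) := Nat.le_self_pow k.succ_ne_zero p
      omega
    have hup' : (0 : ℝ) ≤ (p : ℝ) ^ (k + 1) - u := sub_nonneg.mpr (by exact_mod_cast hup)
    gcongr
    · exact sub_le_self _ u.cast_nonneg
    · exact prime_pow_le_pow hp hodd hk hu hpk
  · obtain rfl : k = 1 := by omega
    have : p = 3 ∨ p = 5 := by
      have : p < 7 := by omega
      interval_cases p <;> simp_all +decide
    rcases this with rfl | rfl <;> interval_cases u <;> norm_num

end Numerics

section Averaging

theorem sum_sub_val_sub_sq {M : ℕ} [NeZero M] (x y : ZMod M) :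
    ∑ t, (((x - t).val : ℤ) - (y - t).val) ^ 2 = M * ((x - y).val * (M - (x - y).val)) := by
  have hterm (t : ZMod M) : (((x - t).val : ℤ) - (y - t).val) ^ 2 =
      (2 * (x - y).val - M) * ((x - t).val - (y - t).val) + (x - y).val * (M - (x - y).val) := by
    have hval : ((x - t).val : ℤ) - (y - t).val = (x - y).val ∨
        ((x - t).val : ℤ) - (y - t).val = (x - y).val - M := by
      have hadd : (x - t).val = ((y - t).val + (x - y).val) % M := by
        rw [← ZMod.val_add]; congr 1; ring
      have hy := ZMod.val_lt (y - t)
      have hxy := ZMod.val_lt (x - y)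
      rcases lt_or_ge ((y - t).val + (x - y).val) M with h | h
      · rw [Nat.mod_eq_of_lt h] at hadd; omega
      · rw [Nat.mod_eq_sub_mod h, Nat.mod_eq_of_lt (by omega)] at hadd; omega
    rcases hval with h | h <;> rw [h] <;> ring
  have hinv (z : ZMod M) : ∑ t, ((z - t).val : ℤ) = ∑ t : ZMod M, (t.val : ℤ) :=
    (Equiv.subLeft z).sum_comp fun t => (t.val : ℤ)
  simp only [hterm, sum_add_distrib, ← mul_sum, sum_sub_distrib, hinv, sub_self, mul_zero,
    zero_add, sum_const, card_univ, ZMod.card, nsmul_eq_mul]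
  ring

theorem exists_four_mul_sum_emod_sub_sq_le {ι : Type*} (s : Finset ι) (f g : ι → ℤ) (M : ℕ)
    [NeZero M] :
    ∃ k : ℤ, 4 * ∑ i ∈ s, ((f i - k) % M - (g i - k) % M) ^ 2 ≤
      #{i ∈ s | f i ≠ g i} * (M : ℤ) ^ 2 := by
  obtain ⟨t, -, ht⟩ := exists_le_of_sum_le (s := (univ : Finset (ZMod M))) univ_nonempty
    (f := fun t => 4 * ∑ i ∈ s, (((f i - t : ZMod M).val : ℤ) - (g i - t : ZMod M).val) ^ 2)
    (g := fun _ => #{i ∈ s | f i ≠ g i} * (M : ℤ) ^ 2) <| by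
      rw [← mul_sum, sum_comm, sum_congr rfl fun i _ => sum_sub_val_sub_sq (f i : ZMod M) (g i)]
      rw [mul_sum, sum_const, card_univ, ZMod.card, nsmul_eq_mul, card_filter, Nat.cast_sum,
        sum_mul, mul_sum]
      refine sum_le_sum fun i _ => ?_
      by_cases h : f i = g i
      · simp [h]
      · have := sq_nonneg ((M : ℤ) - 2 * (f i - g i : ZMod M).val)
        simp only [h, ne_eq, not_false_eq_true, if_true, Nat.cast_one, one_mul]
        nlinarith [M.cast_nonneg (α := ℤ)]
  obtain ⟨k, rfl⟩ := ZMod.intCast_surjective t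
  refine ⟨k, ?_⟩
  simpa only [← Int.cast_sub, ZMod.val_intCast] using ht

end Averaging

section Residues

theorem card_filter_natCast_mul_sub_eq_zero (n d : ℕ) [NeZero n] (a : ZMod n) :
    #{b | (d : ZMod n) * (b - a) = 0} = n.gcd d := by
  have hker := IsAddCyclic.card_nsmulAddMonoidHom_ker (ZMod n) d
  rw [Nat.card_zmod] at hker
  rw [← hker, Nat.card_eq_fintype_card, Fintype.card_subtype]
  exact card_equiv (Equiv.subRight a) fun b => by
    simp [AddMonoidHom.mem_ker, nsmul_eq_mul]

variable {p k : ℕ} [Fact p.Prime]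

theorem card_filter_prime_mul_sub_eq_zero (a : ZMod (p ^ (k + 1))) :
    #{b | (p : ZMod (p ^ (k + 1))) * (b - a) = 0} = p := by
  rw [card_filter_natCast_mul_sub_eq_zero, Nat.gcd_eq_right (dvd_pow_self p k.succ_ne_zero)]

theorem not_isUnit_iff_exists_prime_mul_eq {a : ZMod (p ^ (k + 1))} :
    ¬ IsUnit a ↔ ∃ b, (p : ZMod (p ^ (k + 1))) * b = a := by
  constructor
  · intro ha
    rw [← ZMod.natCast_zmod_val a, ZMod.isUnit_natCast_iff_not_dvd_pow Fact.out k.succ_pos,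
      not_not] at ha
    obtain ⟨c, hc⟩ := ha
    exact ⟨c, by rw [← Nat.cast_mul, ← hc, ZMod.natCast_zmod_val]⟩
  · rintro ⟨b, rfl⟩ hunit
    exact (ZMod.isUnit_natCast_iff_not_dvd_pow Fact.out k.succ_pos).mp
      (isUnit_of_mul_isUnit_left hunit) dvd_rfl

theorem sum_prime_mul_eq_nsmul_sum_not_isUnit {A : Type*} [AddCommMonoid A]
    (F : ZMod (p ^ (k + 1)) → A) :
    ∑ j, F (p * j) = p • ∑ j with ¬ IsUnit j, F j := by
  rw [← sum_nsmul, ← sum_fiberwise_of_maps_to (t := {j | ¬ IsUnit j})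
    (g := fun j : ZMod (p ^ (k + 1)) => (p : ZMod (p ^ (k + 1))) * j) fun j _ => by
      rw [mem_filter_univ, not_isUnit_iff_exists_prime_mul_eq]; exact ⟨j, rfl⟩]
  refine sum_congr rfl fun i hi => ?_
  obtain ⟨b, rfl⟩ := not_isUnit_iff_exists_prime_mul_eq.mp (mem_filter.mp hi).2
  rw [sum_congr rfl fun j hj => congrArg F (mem_filter.mp hj).2, sum_const]
  simp only [← sub_eq_zero (b := (p : ZMod (p ^ (k + 1))) * b), ← mul_sub,
    card_filter_prime_mul_sub_eq_zero]

theorem sum_units_eq_sum_sub_sum_not_isUnit {M A : Type*} [Monoid M] [Fintype M] [Fintype Mˣ]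
    [DecidablePred (IsUnit : M → Prop)] [AddCommGroup A] (F : M → A) :
    ∑ u : Mˣ, F u = ∑ j, F j - ∑ j with ¬ IsUnit j, F j := by
  rw [eq_sub_iff_add_eq, ← sum_filter_add_sum_filter_not univ IsUnit F]
  congr 1
  refine sum_of_injOn Units.val Units.val_injective.injOn (by simp [Set.MapsTo]) ?_ (by simp)
  rintro _ hunit hnot
  obtain ⟨u, rfl⟩ := (mem_filter.mp hunit).2
  exact absurd ⟨u, mem_coe.mpr (mem_univ u), rfl⟩ hnot

-- A Ramanujan sum: only the residues `b` divisible by `p ^ k` contribute.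
theorem sum_units_primitive_apply_mul {R : Type*} [CommRing R] [IsDomain R] [CharZero R]
    {ψ : AddChar (ZMod (p ^ (k + 1))) R} (hψ : ψ.IsPrimitive) (b : ZMod (p ^ (k + 1))) :
    ∑ u : (ZMod (p ^ (k + 1)))ˣ, ψ (u * b) =
      (if b = 0 then (p : R) ^ (k + 1) else 0) - if p * b = 0 then (p : R) ^ k else 0 := by
  have hp : (p : R) ≠ 0 := NeZero.ne _
  rw [sum_units_eq_sum_sub_sum_not_isUnit fun j => ψ (j * b), AddChar.sum_mulShift b hψ]
  congr 1
  · simp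
  · have hnonunit := sum_prime_mul_eq_nsmul_sum_not_isUnit fun j => ψ (j * b)
    simp only [mul_comm (p : ZMod (p ^ (k + 1))), mul_assoc, AddChar.sum_mulShift _ hψ,
      ZMod.card, nsmul_eq_mul] at hnonunit
    rw [mul_comm (p : ZMod (p ^ (k + 1))) b]
    refine mul_left_cancel₀ hp (hnonunit.symm.trans ?_)
    split_ifs <;> simp [pow_succ']

variable (p k) in
/-- The pairs of residues modulo `p ^ (k + 1)` that are congruent modulo `p ^ k`, a condition
encoded as `p * (b - a) = 0`: only these contribute to the trace form `∑ |σ z| ^ 2` of the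
`p ^ (k + 1)`-th cyclotomic field. -/
def congruentPairs : Finset (ZMod (p ^ (k + 1)) × ZMod (p ^ (k + 1))) :=
  {x | (p : ZMod (p ^ (k + 1))) * (x.2 - x.1) = 0}

theorem sum_congruentPairs {A : Type*} [AddCommMonoid A]
    (F : ZMod (p ^ (k + 1)) × ZMod (p ^ (k + 1)) → A) :
    ∑ x ∈ congruentPairs p k, F x =
      ∑ a, ∑ b with (p : ZMod (p ^ (k + 1))) * (b - a) = 0, F (a, b) := by
  simp only [congruentPairs, sum_filter, Fintype.sum_prod_type]

theorem sum_congruentPairs_sub_sq {R : Type*} [CommRing R] (y : ZMod (p ^ (k + 1)) → R) :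
    ∑ x ∈ congruentPairs p k, (y x.1 - y x.2) ^ 2 =
      2 * (p * ∑ a, y a ^ 2 - ∑ x ∈ congruentPairs p k, y x.1 * y x.2) := by
  have hfst : ∑ x ∈ congruentPairs p k, y x.1 ^ 2 = p * ∑ a, y a ^ 2 := by
    simp only [sum_congruentPairs, sum_const, card_filter_prime_mul_sub_eq_zero, nsmul_eq_mul,
      mul_sum]
  have hsnd : ∑ x ∈ congruentPairs p k, y x.2 ^ 2 = ∑ x ∈ congruentPairs p k, y x.1 ^ 2 := by
    refine sum_equiv (Equiv.prodComm _ _) (fun x => ?_) fun _ _ => rfl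
    simp [congruentPairs, ← neg_sub x.2 x.1, -neg_sub]
  simp only [sub_sq, sum_add_distrib, sum_sub_distrib, hsnd, hfst, mul_assoc, ← mul_sum]
  ring

theorem norm_sum_mul_apply_mul_sq {q : ℕ} [NeZero q] (ψ : AddChar (ZMod q) ℂ) (y : ZMod q → ℝ)
    (u : ZMod q) :
    ((‖∑ a, (y a : ℂ) * ψ (u * a)‖ ^ 2 : ℝ) : ℂ) =
      ∑ x : ZMod q × ZMod q, (y x.1 * y x.2 : ℂ) * ψ (u * (x.2 - x.1)) := by
  rw [Complex.ofReal_pow, ← Complex.conj_mul', map_sum, sum_mul_sum, Fintype.sum_prod_type]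
  refine sum_congr rfl fun a _ => sum_congr rfl fun b _ => ?_
  rw [map_mul, Complex.conj_ofReal, ← AddChar.map_neg_eq_conj, mul_sub, sub_eq_neg_add,
    AddChar.map_add_eq_mul]
  ring

theorem sum_units_norm_sum_mul_sq {ψ : AddChar (ZMod (p ^ (k + 1))) ℂ} (hψ : ψ.IsPrimitive)
    (y : ZMod (p ^ (k + 1)) → ℝ) :
    ∑ u : (ZMod (p ^ (k + 1)))ˣ, ‖∑ a, (y a : ℂ) * ψ (u * a)‖ ^ 2 =
      (p : ℝ) ^ k / 2 * ∑ x ∈ congruentPairs p k, (y x.1 - y x.2) ^ 2 := by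
  have hdiag : ∑ x : ZMod (p ^ (k + 1)) × ZMod (p ^ (k + 1)),
      (y x.1 * y x.2 : ℂ) * (if x.2 - x.1 = 0 then (p : ℂ) ^ (k + 1) else 0) =
        p ^ (k + 1) * ∑ a, (y a : ℂ) ^ 2 := by
    simp only [Fintype.sum_prod_type, sub_eq_zero, mul_ite, mul_zero, sum_ite_eq', mem_univ,
      if_true, mul_sum]
    exact sum_congr rfl fun a _ => by ring
  have hpairs : ∑ x : ZMod (p ^ (k + 1)) × ZMod (p ^ (k + 1)),
      (y x.1 * y x.2 : ℂ) * (if p * (x.2 - x.1) = 0 then (p : ℂ) ^ k else 0) =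
        p ^ k * ∑ x ∈ congruentPairs p k, (y x.1 * y x.2 : ℂ) := by
    simp only [congruentPairs, mul_ite, mul_zero, ← sum_filter, mul_sum, mul_comm]
  rw [sum_congruentPairs_sub_sq]
  apply Complex.ofReal_injective
  rw [Complex.ofReal_sum]
  simp only [norm_sum_mul_apply_mul_sq]
  rw [sum_comm]
  simp only [← mul_sum, sum_units_primitive_apply_mul hψ, mul_sub (_ : ℂ), sum_sub_distrib,
    hdiag, hpairs]
  push_cast
  ring

theorem isUnit_sub_one_of_mem {H : Subgroup (ZMod (p ^ (k + 1)))ˣ} (hH : ¬ p ∣ Nat.card H)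
    {u : (ZMod (p ^ (k + 1)))ˣ} (hu : u ∈ H) (hu1 : u ≠ 1) :
    IsUnit (u - 1 : ZMod (p ^ (k + 1))) := by
  by_contra hnonunit
  obtain ⟨b, hb⟩ := not_isUnit_iff_exists_prime_mul_eq.mp hnonunit
  have hpow : u ^ p ^ k = 1 := by
    have := dvd_sub_pow_of_dvd_sub (R := ZMod (p ^ (k + 1))) (p := p) ⟨b, hb.symm⟩ k
    rw [← Nat.cast_pow, ZMod.natCast_self, zero_dvd_iff, one_pow, sub_eq_zero] at this
    exact Units.ext (by simpa using this)
  have hcop : (p ^ k).Coprime (Nat.card H) :=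
    ((Nat.Prime.coprime_iff_not_dvd Fact.out).mpr hH).pow_left k
  refine hu1 (orderOf_eq_one_iff.mp (Nat.eq_one_of_dvd_coprimes hcop ?_ ?_))
  · exact orderOf_dvd_of_pow_eq_one hpow
  · exact Subgroup.orderOf_dvd_natCard H hu

theorem card_le_card_filter_eq {B : Type*} [DecidableEq B] {H : Subgroup (ZMod (p ^ (k + 1)))ˣ}
    (hH : ¬ p ∣ Nat.card H) {n : ZMod (p ^ (k + 1)) → B} (hn : ∀ u ∈ H, ∀ a, n (u * a) = n a)
    {a : ZMod (p ^ (k + 1))} (ha : p * a = 0) (ha0 : a ≠ 0) :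
    Nat.card H ≤ #{b | (p : ZMod (p ^ (k + 1))) * (b - a) = 0 ∧ n a = n b} := by
  classical
  rw [Nat.card_eq_fintype_card]
  refine card_le_card_of_injOn (s := univ) (fun u : H => u.1 * a) ?_ ?_
  · intro u _
    simp [hn u u.2, mul_sub, mul_left_comm _ _ a, ha]
  · intro u _ v _ (huv : u.1 * a = v.1 * a)
    by_contra hne
    have hunit := isUnit_sub_one_of_mem hH (H.mul_mem (H.inv_mem v.2) u.2)
      fun h => hne (Subtype.ext (inv_mul_eq_one.mp h).symm)
    refine ha0 (hunit.mul_right_eq_zero.mp ?_)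
    rw [sub_mul, one_mul, Units.val_mul, mul_assoc, huv, Units.inv_mul_cancel_left, sub_self]

theorem card_filter_congruentPairs_ne_add_le {B : Type*} [DecidableEq B]
    {H : Subgroup (ZMod (p ^ (k + 1)))ˣ}
    (hH : ¬ p ∣ Nat.card H) {n : ZMod (p ^ (k + 1)) → B} (hn : ∀ u ∈ H, ∀ a, n (u * a) = n a) :
    #{x ∈ congruentPairs p k | n x.1 ≠ n x.2} + (p - 1) * (Nat.card H - 1) ≤
      (p - 1) * p ^ (k + 1) := by
  have hpairs : #{x ∈ congruentPairs p k | n x.1 ≠ n x.2} =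
      ∑ a, #{b | (p : ZMod (p ^ (k + 1))) * (b - a) = 0 ∧ n a ≠ n b} := by
    simp only [card_eq_sum_ones, sum_filter, sum_congruentPairs, ite_and]
  have hsocle : (p - 1) * (Nat.card H - 1) =
      ∑ a : ZMod (p ^ (k + 1)), if p * a = 0 ∧ a ≠ 0 then Nat.card H - 1 else 0 := by
    rw [← sum_filter, sum_const, smul_eq_mul, filter_and_not, filter_eq' univ, if_pos (mem_univ _),
      sdiff_singleton_eq_erase, card_erase_of_mem (by simp)]
    simpa using congrArg (fun c => (c - 1) * (Nat.card H - 1))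
      (card_filter_prime_mul_sub_eq_zero (0 : ZMod (p ^ (k + 1)))).symm
  have hconst : (p - 1) * p ^ (k + 1) = ∑ _a : ZMod (p ^ (k + 1)), (p - 1) := by
    rw [sum_const, card_univ, ZMod.card, smul_eq_mul, mul_comm]
  rw [hpairs, hsocle, hconst, ← sum_add_distrib]
  refine sum_le_sum fun a _ => ?_
  have hfiber : #{b | (p : ZMod (p ^ (k + 1))) * (b - a) = 0 ∧ n a ≠ n b} +
      #{b | (p : ZMod (p ^ (k + 1))) * (b - a) = 0 ∧ n a = n b} = p := by
    rw [add_comm, ← filter_filter, ← filter_filter, card_filter_add_card_filter_not,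
      card_filter_prime_mul_sub_eq_zero]
  have hself : 1 ≤ #{b | (p : ZMod (p ^ (k + 1))) * (b - a) = 0 ∧ n a = n b} :=
    card_pos.mpr ⟨a, by simp⟩
  split_ifs with ha
  · have := card_le_card_filter_eq hH hn ha.1 ha.2
    omega
  · omega

theorem exists_sum_units_norm_sum_emod_sq_le {ψ : AddChar (ZMod (p ^ (k + 1))) ℂ}
    (hψ : ψ.IsPrimitive) {H : Subgroup (ZMod (p ^ (k + 1)))ˣ} (hH : ¬ p ∣ Nat.card H)
    {n : ZMod (p ^ (k + 1)) → ℤ} (hn : ∀ u ∈ H, ∀ a, n (u * a) = n a) (M : ℕ) [NeZero M] :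
    ∃ t : ℤ, ∑ u : (ZMod (p ^ (k + 1)))ˣ, ‖∑ a, (((n a - t) % M : ℤ) : ℂ) * ψ (u * a)‖ ^ 2 ≤
      (p ^ (k + 1)).totient * ((M : ℝ) ^ 2 * (((p : ℝ) ^ (k + 1) - (Nat.card H - 1)) / 8)) := by
  obtain ⟨t, ht⟩ := exists_four_mul_sum_emod_sub_sq_le (congruentPairs p k)
    (fun x => n x.1) (fun x => n x.2) M
  have hcount : (#{x ∈ congruentPairs p k | n x.1 ≠ n x.2} : ℝ) ≤
      (p - 1) * ((p : ℝ) ^ (k + 1) - (Nat.card H - 1)) := by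
    have := (Nat.cast_le (α := ℝ)).mpr (card_filter_congruentPairs_ne_add_le hH hn)
    push_cast [Nat.cast_pred (Nat.Prime.pos Fact.out : 0 < p),
      Nat.cast_pred (Nat.card_pos : 0 < Nat.card H)] at this
    linarith
  have htrace := sum_units_norm_sum_mul_sq hψ fun a => (((n a - t) % M : ℤ) : ℝ)
  simp only [Complex.ofReal_intCast] at htrace
  refine ⟨t, htrace.trans_le ?_⟩
  rw [Nat.totient_prime_pow_succ Fact.out]
  push_cast [Nat.cast_pred (Nat.Prime.pos Fact.out : 0 < p)]
  have ht' : (4 : ℝ) * ∑ x ∈ congruentPairs p k,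
      ((((n x.1 - t) % M : ℤ) : ℝ) - ((n x.2 - t) % M : ℤ)) ^ 2 ≤
        (p - 1) * ((p : ℝ) ^ (k + 1) - (Nat.card H - 1)) * (M : ℝ) ^ 2 := by
    refine le_trans (by exact_mod_cast ht) (mul_le_mul_of_nonneg_right hcount (by positivity))
  nlinarith [mul_le_mul_of_nonneg_left ht' (by positivity : (0 : ℝ) ≤ (p : ℝ) ^ k)]

end Residues

section Approximation

theorem prod_le_pow_card_of_sum_le {ι : Type*} {s : Finset ι} {z : ι → ℝ} {B : ℝ}
    (hz : ∀ i ∈ s, 0 ≤ z i) (h : ∑ i ∈ s, z i ≤ #s * B) : ∏ i ∈ s, z i ≤ B ^ #s := by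
  rcases s.eq_empty_or_nonempty with rfl | hs
  · simp
  have hcard : (0 : ℝ) < #s := by exact_mod_cast hs.card_pos
  have hprod : 0 ≤ ∏ i ∈ s, z i := prod_nonneg hz
  have hmean := Real.geom_mean_le_arith_mean s (fun _ => 1) z (by simp) (by simpa using hcard) hz
  simp only [Real.rpow_one, sum_const, nsmul_eq_mul, mul_one, one_mul] at hmean
  calc ∏ i ∈ s, z i = ((∏ i ∈ s, z i) ^ (#s : ℝ)⁻¹) ^ #s :=
        (Real.rpow_inv_natCast_pow hprod hs.card_ne_zero).symm
    _ ≤ B ^ #s := by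
        gcongr
        exact hmean.trans (by rwa [div_le_iff₀' hcard])

theorem sq_abs_norm_le_pow_finrank {L : Type*} [Field L] [NumberField L] [IsGalois ℚ L]
    (σ : L →+* ℂ) {w : L} {B : ℝ}
    (h : ∑ g : Gal(L/ℚ), ‖σ (g w)‖ ^ 2 ≤ Module.finrank ℚ L * B) :
    |(Algebra.norm ℚ w : ℝ)| ^ 2 ≤ B ^ Module.finrank ℚ L := by
  have hcard : #(univ : Finset Gal(L/ℚ)) = Module.finrank ℚ L := by
    rw [card_univ, ← Nat.card_eq_fintype_card, IsGalois.card_aut_eq_finrank]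
  have hnorm : (Algebra.norm ℚ w : ℂ) = ∏ g : Gal(L/ℚ), σ (g w) := by
    rw [← map_prod, ← Algebra.norm_eq_prod_automorphisms, eq_ratCast, map_ratCast]
  calc |(Algebra.norm ℚ w : ℝ)| ^ 2 = ‖(Algebra.norm ℚ w : ℂ)‖ ^ 2 := by
        rw [← Complex.ofReal_ratCast, Complex.norm_real, Real.norm_eq_abs]
    _ = ∏ g : Gal(L/ℚ), ‖σ (g w)‖ ^ 2 := by rw [hnorm, norm_prod, prod_pow]
    _ ≤ B ^ Module.finrank ℚ L := by
        rw [← hcard] at h ⊢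
        exact prod_le_pow_card_of_sum_le (fun _ _ => by positivity) h

theorem exists_natCast_mul_eq_intCast {ι : Type*} [Finite ι] (c : ι → ℚ) :
    ∃ M : ℕ, M ≠ 0 ∧ ∃ n : ι → ℤ, ∀ i, (M : ℚ) * c i = n i := by
  obtain ⟨b, hb⟩ := IsLocalization.exist_integer_multiples_of_finite (nonZeroDivisors ℤ) c
  choose n hn using hb
  refine ⟨b.1.natAbs, by simp, fun i => b.1.sign * n i, fun i => ?_⟩
  rw [← Int.cast_natCast, ← Int.sign_mul_self_eq_natAbs, Int.cast_mul, Int.cast_mul, mul_assoc]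
  congr 1
  simpa using (hn i).symm

theorem map_zmodChar {C D F : Type*} [CommMonoid C] [CommMonoid D] [FunLike F C D]
    [MonoidHomClass F C D] {q : ℕ} [NeZero q] {ζ : C} {η : D} (hζ : ζ ^ q = 1) (hη : η ^ q = 1)
    (f : F) {u : ZMod q} (h : f ζ = η ^ u.val) (a : ZMod q) :
    f (AddChar.zmodChar q hζ a) = AddChar.zmodChar q hη (u * a) := by
  rw [AddChar.zmodChar_apply, map_pow, h, ← pow_mul, ← AddChar.zmodChar_apply' hη]
  simp

theorem exists_natCast_mul_eq_sum_zmodChar {q : ℕ} [NeZero q] {L : Type*} [Field L] [CharZero L]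
    [IsCyclotomicExtension {q} ℚ L] {ζ : L} (hζ : IsPrimitiveRoot ζ q) (z : L) :
    ∃ M : ℕ, M ≠ 0 ∧ ∃ n : ZMod q → ℤ,
      (M : L) * z = ∑ a, (n a : L) * AddChar.zmodChar q hζ.pow_eq_one a := by
  have hz : z ∈ Submodule.span ℚ (Set.range (AddChar.zmodChar q hζ.pow_eq_one)) := by
    have hadj : z ∈ (Algebra.adjoin ℚ {ζ}).toSubmodule := by
      rw [IsCyclotomicExtension.adjoin_primitive_root_eq_top hζ]
      exact Submodule.mem_top
    rw [Algebra.adjoin_eq_span] at hadj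
    refine Submodule.span_mono (fun y hy => ?_) hadj
    obtain ⟨i, rfl⟩ := Submonoid.mem_closure_singleton.mp hy
    exact ⟨i, AddChar.zmodChar_apply' _ i⟩
  obtain ⟨c, rfl⟩ := (Submodule.mem_span_range_iff_exists_fun ℚ).mp hz
  obtain ⟨M, hM, n, hn⟩ := exists_natCast_mul_eq_intCast c
  refine ⟨M, hM, n, ?_⟩
  simp only [mul_sum, Algebra.smul_def, ← mul_assoc]
  refine sum_congr rfl fun a _ => ?_
  have := congrArg (algebraMap ℚ L) (hn a)
  rw [map_mul, map_natCast, map_intCast] at this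
  rw [this]

variable {q : ℕ} [NeZero q] {K L : Type*} [Field K] [Field L] [Algebra K L] {ζ : L}

theorem algEquiv_sum_zmodChar (hζ : IsPrimitiveRoot ζ q) (h : Gal(L/K)) (n : ZMod q → ℤ) :
    h (∑ a, (n (hζ.autToPow K h * a) : L) * AddChar.zmodChar q hζ.pow_eq_one a) =
      ∑ a, (n a : L) * AddChar.zmodChar q hζ.pow_eq_one a := by
  simp only [map_sum, map_mul, map_intCast,
    map_zmodChar hζ.pow_eq_one hζ.pow_eq_one h (hζ.autToPow_spec K h).symm]
  exact Equiv.sum_comp (Units.mulLeft (hζ.autToPow K h))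
    fun a => (n a : L) * AddChar.zmodChar q hζ.pow_eq_one a

theorem exists_natCast_mul_algebraMap_eq_sum_zmodChar [CharZero L] [FiniteDimensional K L]
    [IsCyclotomicExtension {q} ℚ L] (hζ : IsPrimitiveRoot ζ q) (x : K) :
    ∃ M : ℕ, M ≠ 0 ∧ ∃ n : ZMod q → ℤ, (∀ u ∈ (hζ.autToPow K).range, ∀ a, n (u * a) = n a) ∧
      (M : L) * algebraMap K L x = ∑ a, (n a : L) * AddChar.zmodChar q hζ.pow_eq_one a := by
  obtain ⟨M, hM, n, hn⟩ := exists_natCast_mul_eq_sum_zmodChar hζ (algebraMap K L x)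
  refine ⟨Fintype.card Gal(L/K) * M, mul_ne_zero Fintype.card_ne_zero hM,
    fun a => ∑ h : Gal(L/K), n (hζ.autToPow K h * a), ?_, ?_⟩
  · rintro _ ⟨g, rfl⟩ a
    simp only [← mul_assoc, ← Units.val_mul, ← map_mul]
    exact Equiv.sum_comp (Equiv.mulRight g) fun h => n (hζ.autToPow K h * a)
  · have hconj (h : Gal(L/K)) : ∑ a, (n (hζ.autToPow K h * a) : L) *
        AddChar.zmodChar q hζ.pow_eq_one a = M * algebraMap K L x := by
      refine h.injective ?_
      rw [algEquiv_sum_zmodChar, ← hn, map_mul, map_natCast, h.commutes]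
    simp only [Int.cast_sum, sum_mul]
    rw [sum_comm, sum_congr rfl fun h _ => hconj h, sum_const, card_univ, nsmul_eq_mul,
      Nat.cast_mul, mul_assoc]

theorem exists_ringOfIntegers_algebraMap_eq_sum_zmodChar [FiniteDimensional K L] [IsGalois K L]
    (hζ : IsPrimitiveRoot ζ q) {n : ZMod q → ℤ}
    (hn : ∀ u ∈ (hζ.autToPow K).range, ∀ a, n (u * a) = n a) :
    ∃ c : 𝓞 K, algebraMap K L c = ∑ a, (n a : L) * AddChar.zmodChar q hζ.pow_eq_one a := by
  obtain ⟨c, hc⟩ := (IsGalois.mem_range_algebraMap_iff_fixed (F := K)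
    (∑ a, (n a : L) * AddChar.zmodChar q hζ.pow_eq_one a)).mpr fun h => by
      conv_rhs => rw [← algEquiv_sum_zmodChar hζ h]
      simp only [hn _ ⟨h, rfl⟩]
  have hint : IsIntegral ℤ (algebraMap K L c) := hc ▸ IsIntegral.sum _ fun a _ =>
    (isIntegral_algebraMap (R := ℤ) (x := n a)).mul <| by
      rw [AddChar.zmodChar_apply]
      exact (hζ.isIntegral (NeZero.pos q)).pow _
  exact ⟨⟨c, (isIntegral_algebraMap_iff (algebraMap K L).injective).mp hint⟩, hc⟩

-- The shift `t` does not change the sum because the `q`-th roots of unity add up to zero.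
theorem exists_natCast_mul_sub_eq_sum_emod [FiniteDimensional K L] [IsGalois K L] (hq : 1 < q)
    (hζ : IsPrimitiveRoot ζ q) {x : K} {M : ℕ} {n : ZMod q → ℤ}
    (hn : ∀ u ∈ (hζ.autToPow K).range, ∀ a, n (u * a) = n a)
    (hx : (M : L) * algebraMap K L x = ∑ a, (n a : L) * AddChar.zmodChar q hζ.pow_eq_one a)
    (t : ℤ) :
    ∃ c : 𝓞 K, (M : L) * algebraMap K L (x - c) =
      ∑ a, (((n a - t) % M : ℤ) : L) * AddChar.zmodChar q hζ.pow_eq_one a := by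
  have : Fact (1 < q) := ⟨hq⟩
  have hsum : ∑ a, AddChar.zmodChar q hζ.pow_eq_one a = 0 := by
    simpa using AddChar.sum_mulShift 1 (AddChar.zmodChar_primitive_of_primitive_root q hζ)
  obtain ⟨c, hc⟩ := exists_ringOfIntegers_algebraMap_eq_sum_zmodChar (K := K) hζ
    (n := fun a => (n a - t) / M) fun u hu a => by simp only [hn u hu]
  have hshift : (M : L) * algebraMap K L x =
      ∑ a, ((n a - t : ℤ) : L) * AddChar.zmodChar q hζ.pow_eq_one a := by
    simp only [hx, Int.cast_sub, sub_mul, sum_sub_distrib, ← mul_sum, hsum, mul_zero, sub_zero]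
  refine ⟨c, ?_⟩
  rw [map_sub, mul_sub, hshift, hc, mul_sum, ← sum_sub_distrib]
  refine sum_congr rfl fun a _ => ?_
  rw [Int.emod_def]
  push_cast
  ring

theorem sum_gal_norm_sum_zmodChar_sq [NumberField L] [IsCyclotomicExtension {q} ℚ L]
    (hζ : IsPrimitiveRoot ζ q) (σ : L →+* ℂ) (n : ZMod q → ℤ) :
    ∑ g : Gal(L/ℚ), ‖σ (g (∑ a, (n a : L) * AddChar.zmodChar q hζ.pow_eq_one a))‖ ^ 2 =
      ∑ u : (ZMod q)ˣ, ‖∑ a, (n a : ℂ) *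
        AddChar.zmodChar q (hζ.map_of_injective σ.injective).pow_eq_one (u * a)‖ ^ 2 := by
  refine Fintype.sum_equiv (IsCyclotomicExtension.Rat.galEquivZMod q L).toEquiv _ _ fun g => ?_
  have hg : (σ.comp (g : L →+* L)) ζ =
      (σ ζ) ^ (IsCyclotomicExtension.Rat.galEquivZMod q L g : ZMod q).val := by
    rw [← map_pow, ← IsCyclotomicExtension.Rat.galEquivZMod_apply_of_pow_eq q L g hζ.pow_eq_one]
    rfl
  have := map_zmodChar hζ.pow_eq_one (hζ.map_of_injective σ.injective).pow_eq_one _ hg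
  simp only [RingHom.comp_apply, RingHom.coe_coe] at this
  simp only [map_sum, map_mul, map_intCast, this]
  rfl

theorem card_range_autToPow [FiniteDimensional K L] [IsGalois K L] [IsCyclotomicExtension {q} K L]
    (hζ : IsPrimitiveRoot ζ q) : Nat.card (hζ.autToPow K).range = Module.finrank K L := by
  rw [← IsGalois.card_aut_eq_finrank K L]
  exact Nat.card_range_of_injective (hζ.autToPow_injective K)

theorem isCyclotomicExtension_tower_top (S : Set ℕ) (A B C : Type*) [CommRing A] [CommRing B]
    [CommRing C] [Algebra A B] [Algebra A C] [Algebra B C] [IsScalarTower A B C]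
    [hC : IsCyclotomicExtension S A C] : IsCyclotomicExtension S B C := by
  refine ⟨hC.exists_isPrimitiveRoot, fun x => ?_⟩
  have hle : Algebra.adjoin A {b : C | ∃ n ∈ S, n ≠ 0 ∧ b ^ n = 1} ≤
      (Algebra.adjoin B {b : C | ∃ n ∈ S, n ≠ 0 ∧ b ^ n = 1}).restrictScalars A :=
    Algebra.adjoin_le Algebra.subset_adjoin
  exact hle (hC.adjoin_roots x)

variable (L) in
theorem exists_sq_abs_norm_sub_le [NumberField K] [NumberField L] {p k : ℕ} [Fact p.Prime]
    [IsCyclotomicExtension {p ^ (k + 1)} ℚ L] (hp : ¬ p ∣ Module.finrank K L) (x : K) :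
    ∃ c : 𝓞 K, |(Algebra.norm ℚ (x - c) : ℝ)| ^ 2 ≤
      (((p : ℝ) ^ (k + 1) - (Module.finrank K L - 1)) / 8) ^ Module.finrank ℚ K := by
  have : IsGalois ℚ L := IsCyclotomicExtension.isGalois {p ^ (k + 1)} ℚ L
  have : IsCyclotomicExtension {p ^ (k + 1)} K L := isCyclotomicExtension_tower_top _ ℚ K L
  have : IsGalois K L := IsCyclotomicExtension.isGalois {p ^ (k + 1)} K L
  have hζ := IsCyclotomicExtension.zeta_spec (p ^ (k + 1)) ℚ L
  have hcard : Nat.card (hζ.autToPow K).range = Module.finrank K L := card_range_autToPow hζ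
  obtain ⟨σ⟩ : Nonempty (L →+* ℂ) := inferInstance
  obtain ⟨M, hM, n, hn, hx⟩ := exists_natCast_mul_algebraMap_eq_sum_zmodChar hζ x
  have : NeZero M := ⟨hM⟩
  obtain ⟨t, ht⟩ := exists_sum_units_norm_sum_emod_sq_le
    (AddChar.zmodChar_primitive_of_primitive_root _ (hζ.map_of_injective σ.injective))
    (by rwa [hcard]) hn M
  rw [← sum_gal_norm_sum_zmodChar_sq hζ σ, hcard] at ht
  obtain ⟨c, hc⟩ := exists_natCast_mul_sub_eq_sum_emod
    (Nat.one_lt_pow k.succ_ne_zero (Nat.Prime.one_lt Fact.out)) hζ hn hx t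
  refine ⟨c, le_of_pow_le_pow_left₀ (Module.finrank_pos (R := K) (M := L)).ne' ?_ ?_⟩
  · have hle : Module.finrank K L ≤ p ^ (k + 1) := by
      rw [← hcard]
      refine (Subgroup.card_le_card_group _).trans ?_
      rw [Nat.card_eq_fintype_card, ZMod.card_units_eq_totient]
      exact Nat.totient_le _
    have hle' : (Module.finrank K L : ℝ) ≤ (p : ℝ) ^ (k + 1) := by exact_mod_cast hle
    exact pow_nonneg (by linarith) _
  have hL := sq_abs_norm_le_pow_finrank σ (w := algebraMap K L (x - c)) <| by
    rw [← hc] at ht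
    simp only [map_mul, map_natCast, norm_mul, mul_pow, ← mul_sum, Complex.norm_natCast] at ht
    rw [IsCyclotomicExtension.Rat.finrank (p ^ (k + 1)) L]
    exact le_of_mul_le_mul_left (ht.trans_eq (mul_left_comm _ _ _)) (by positivity)
  rw [← Algebra.norm_norm (S := K), Algebra.norm_algebraMap, map_pow, Rat.cast_pow, abs_pow,
    ← Module.finrank_mul_finrank ℚ K L] at hL
  rwa [pow_right_comm, ← pow_mul (_ / 8)]

end Approximation

section Conductor

theorem subgroup_le_of_card_dvd_card {G : Type*} [Group G] [Finite G] [IsCyclic G]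
    {P H : Subgroup G} (h : Nat.card P ∣ Nat.card H) : P ≤ H := by
  classical
  have := Fintype.ofFinite G
  have hpow {Q : Subgroup G} (hQ : Nat.card Q ∣ Nat.card H) {g : G} (hg : g ∈ Q) :
      g ^ Nat.card H = 1 :=
    orderOf_dvd_iff_pow_eq_one.mp ((Subgroup.orderOf_dvd_natCard Q hg).trans hQ)
  have hsub : ({g | g ∈ H} : Finset G) ⊆ ({g | g ^ Nat.card H = 1} : Finset G) :=
    monotone_filter_right _ fun _ _ hg => hpow (Q := H) dvd_rfl hg
  have hcard : #({g | g ^ Nat.card H = 1} : Finset G) ≤ #({g | g ∈ H} : Finset G) := by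
    rw [← Fintype.card_subtype (· ∈ H), ← Nat.card_eq_fintype_card]
    exact IsCyclic.card_pow_eq_one_le Nat.card_pos
  intro g hg
  have hmem : g ∈ ({g | g ^ Nat.card H = 1} : Finset G) := mem_filter_univ _ |>.mpr (hpow h hg)
  rwa [← eq_of_subset_of_card_le hsub hcard, mem_filter_univ] at hmem

theorem intermediateField_le_of_finrank_dvd_finrank {k L : Type*} [Field k] [Field L] [Algebra k L]
    [FiniteDimensional k L] [IsGalois k L] [IsCyclic Gal(L/k)] {E F : IntermediateField k L}
    (h : Module.finrank k E ∣ Module.finrank k F) : E ≤ F := by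
  have hcard : Nat.card F.fixingSubgroup ∣ Nat.card E.fixingSubgroup := by
    rw [IsGalois.card_fixingSubgroup_eq_finrank, IsGalois.card_fixingSubgroup_eq_finrank]
    obtain ⟨d, hd⟩ := h
    refine ⟨d, Nat.eq_of_mul_eq_mul_left (Module.finrank_pos (R := k) (M := E)) ?_⟩
    rw [Module.finrank_mul_finrank, ← Module.finrank_mul_finrank k F L, hd]
    ring
  rw [← IsGalois.fixedField_fixingSubgroup E, ← IsGalois.fixedField_fixingSubgroup F]
  exact IntermediateField.fixedField_le (subgroup_le_of_card_dvd_card hcard)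

-- Mathlib's instance is about `CyclotomicField.algebra`, whereas the `ℚ`-algebra structure that
-- instance search finds here and in `HasConductor` is `DivisionRing.toRatAlgebra`.
theorem isCyclotomicExtension_cyclotomicField_rat (n : ℕ) [NeZero n] :
    IsCyclotomicExtension {n} ℚ (CyclotomicField n ℚ) := by
  rw [Subsingleton.elim (DivisionRing.toRatAlgebra : Algebra ℚ (CyclotomicField n ℚ))
    (CyclotomicField.algebra n ℚ)]
  exact CyclotomicField.isCyclotomicExtension n ℚ

theorem nonempty_algHom_of_finrank_dvd_totient {q m : ℕ} [NeZero q] [NeZero m] (hm : m ∣ q)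
    {K : Type*} (L : Type*) [Field K] [NumberField K] [Field L] [NumberField L] [Algebra K L]
    [IsCyclotomicExtension {q} ℚ L] [IsCyclic (ZMod q)ˣ]
    (h : Module.finrank ℚ K ∣ Nat.totient m) :
    Nonempty (K →ₐ[ℚ] CyclotomicField m ℚ) := by
  have : IsGalois ℚ L := IsCyclotomicExtension.isGalois {q} ℚ L
  have : IsCyclic Gal(L/ℚ) :=
    (IsCyclotomicExtension.Rat.galEquivZMod q L).isCyclic.mpr inferInstance
  have := isCyclotomicExtension_cyclotomicField_rat m
  obtain ⟨d, hd⟩ := hm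
  have hζ := (IsCyclotomicExtension.zeta_spec q ℚ L).pow (NeZero.pos q) (hd.trans (mul_comm m d))
  obtain ⟨F, hF⟩ : ∃ F : IntermediateField ℚ L, IsCyclotomicExtension {m} ℚ F :=
    ⟨_, hζ.intermediateField_adjoin_isCyclotomicExtension ℚ⟩
  let f : K →ₐ[ℚ] L := IsScalarTower.toAlgHom ℚ K L
  have hrange : Module.finrank ℚ f.fieldRange = Module.finrank ℚ K :=
    (AlgEquiv.ofInjectiveField f).toLinearEquiv.finrank_eq.symm
  have hle : f.fieldRange ≤ F := intermediateField_le_of_finrank_dvd_finrank <| by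
    rwa [hrange, IsCyclotomicExtension.Rat.finrank m F]
  exact ⟨(IsCyclotomicExtension.algEquiv {m} ℚ F (CyclotomicField m ℚ)).toAlgHom.comp <|
    (IntermediateField.inclusion hle).comp f.rangeRestrict⟩

theorem not_dvd_finrank_of_isEmpty_algHom {p k : ℕ} [hp : Fact p.Prime] (hp2 : p ≠ 2) (hk : k ≠ 0)
    {K L : Type*} [Field K] [NumberField K] [Field L] [NumberField L] [Algebra K L]
    [IsCyclotomicExtension {p ^ (k + 1)} ℚ L] (h : IsEmpty (K →ₐ[ℚ] CyclotomicField (p ^ k) ℚ)) :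
    ¬ p ∣ Module.finrank K L := by
  rintro ⟨d, hd⟩
  have := ZMod.isCyclic_units_of_prime_pow p hp.out hp2 (k + 1)
  refine not_nonempty_iff.mpr h <| nonempty_algHom_of_finrank_dvd_totient
    (Nat.pow_dvd_pow p k.le_succ) L ⟨d, Nat.eq_of_mul_eq_mul_left hp.out.pos ?_⟩
  rw [← Nat.totient_mul_of_prime_of_dvd hp.out (dvd_pow_self p hk), ← pow_succ',
    ← IsCyclotomicExtension.Rat.finrank (p ^ (k + 1)) L, ← Module.finrank_mul_finrank ℚ K L, hd]
  ring

end Conductor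

section Discriminant

open Polynomial

theorem map_minpoly_eq_prod_X_sub_C {K L : Type*} [Field K] [Field L] [Algebra K L]
    [FiniteDimensional K L] [IsGalois K L] {x : L} (hx : Algebra.adjoin K {x} = ⊤) :
    (minpoly K x).map (algebraMap K L) = ∏ g : Gal(L/K), (X - C (g x)) := by
  have hint : IsIntegral K x := Algebra.IsIntegral.isIntegral x
  have hinj : Function.Injective fun g : Gal(L/K) => g x := fun g h hgh =>
    AlgEquiv.coe_toAlgHom_injective <| AlgHom.ext_of_adjoin_eq_top hx <| by simpa using hgh
  have hdeg : (minpoly K x).natDegree = Module.finrank K L :=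
    (Field.primitive_element_iff_minpoly_natDegree_eq K x).mp
      ((IntermediateField.adjoin_simple_eq_top_iff_of_isAlgebraic hint.isAlgebraic).mpr hx)
  refine eq_of_monic_of_dvd_of_natDegree_le (monic_prod_X_sub_C _ _)
    ((minpoly.monic hint).map _) (prod_dvd_of_coprime ?_ fun g _ => ?_) ?_
  · exact fun g _ h _ hgh => pairwise_coprime_X_sub_C hinj hgh
  · rw [dvd_iff_isRoot, IsRoot.def, eval_map_algebraMap, ← AlgEquiv.coe_toAlgHom,
      aeval_algHom_apply, minpoly.aeval, map_zero]
  · rw [natDegree_map, natDegree_prod_of_monic _ _ fun g _ => monic_X_sub_C _]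
    simp [hdeg, ← Nat.card_eq_fintype_card, IsGalois.card_aut_eq_finrank]

theorem aeval_derivative_minpoly_eq_prod {K L : Type*} [Field K] [Field L] [Algebra K L]
    [FiniteDimensional K L] [IsGalois K L] [DecidableEq Gal(L/K)] {x : L}
    (hx : Algebra.adjoin K {x} = ⊤) :
    aeval x (derivative (minpoly K x)) = ∏ g ∈ univ.erase (1 : Gal(L/K)), (x - g x) := by
  rw [← eval_map_algebraMap, ← derivative_map, map_minpoly_eq_prod_X_sub_C hx,
    ← mul_prod_erase _ _ (mem_univ 1)]
  simp [eval_prod]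

theorem abs_norm_sub_pow_val_eq_prime {L : Type*} [Field L] [CharZero L] {p k : ℕ}
    [hp : Fact p.Prime] [IsCyclotomicExtension {p ^ (k + 1)} ℚ L] (hp2 : p ≠ 2) {ζ : L}
    (hζ : IsPrimitiveRoot ζ (p ^ (k + 1))) {a : ZMod (p ^ (k + 1))} (ha : IsUnit (a - 1)) :
    |Algebra.norm ℚ (ζ - ζ ^ a.val)| = p := by
  have : Fact (1 < p ^ (k + 1)) := ⟨Nat.one_lt_pow k.succ_ne_zero hp.out.one_lt⟩
  have hirr := Polynomial.cyclotomic.irreducible_rat (NeZero.pos (p ^ (k + 1)))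
  have hpow : ζ ^ a.val = ζ * ζ ^ (a - 1).val := by
    have := AddChar.map_add_eq_mul (AddChar.zmodChar (p ^ (k + 1)) hζ.pow_eq_one) 1 (a - 1)
    rwa [add_sub_cancel, AddChar.zmodChar_apply, AddChar.zmodChar_apply, AddChar.zmodChar_apply,
      ZMod.val_one, pow_one] at this
  have hprim : IsPrimitiveRoot (ζ ^ (a - 1).val) (p ^ (k + 1)) := hζ.pow_of_coprime _ <| by
    rwa [← ZMod.isUnit_iff_coprime, ZMod.natCast_zmod_val]
  have hne : p ^ (k + 1) ≠ 2 := fun h => hp2 <|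
    (Nat.prime_dvd_prime_iff_eq hp.out Nat.prime_two).mp (h ▸ dvd_pow_self p k.succ_ne_zero)
  have habs : |Algebra.norm ℚ (-1 : L)| = 1 := by
    rw [← pow_eq_one_iff_of_nonneg (abs_nonneg _) two_ne_zero, ← abs_pow, ← map_pow, neg_one_sq,
      map_one, abs_one]
  calc |Algebra.norm ℚ (ζ - ζ ^ a.val)|
      = |Algebra.norm ℚ (-1 * ζ * (ζ ^ (a - 1).val - 1))| := by rw [hpow]; congr 2; ring
    _ = p := by
      rw [map_mul, map_mul, abs_mul, abs_mul, habs, hζ.norm_eq_one hne hirr,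
        hprim.norm_sub_one_of_prime_ne_two hirr hp2]
      simp

variable {p k : ℕ} [Fact p.Prime] (K : Type*) {L : Type*} [Field K] [NumberField K] [Field L]
  [NumberField L] [Algebra K L] [IsCyclotomicExtension {p ^ (k + 1)} ℚ L] {ζ : L}

theorem abs_norm_aeval_derivative_minpoly (hp2 : p ≠ 2) (hp : ¬ p ∣ Module.finrank K L)
    (hζ : IsPrimitiveRoot ζ (p ^ (k + 1))) :
    |Algebra.norm ℚ (aeval ζ (derivative (minpoly K ζ)))| = p ^ (Module.finrank K L - 1) := by
  classical
  have : IsCyclotomicExtension {p ^ (k + 1)} K L := isCyclotomicExtension_tower_top _ ℚ K L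
  have : IsGalois K L := IsCyclotomicExtension.isGalois {p ^ (k + 1)} K L
  have hunit {g : Gal(L/K)} (hg : g ≠ 1) : IsUnit ((hζ.autToPow K g : ZMod (p ^ (k + 1))) - 1) :=
    isUnit_sub_one_of_mem (H := (hζ.autToPow K).range) (by rwa [card_range_autToPow hζ]) ⟨g, rfl⟩ <|
      (map_ne_one_iff _ (hζ.autToPow_injective K)).mpr hg
  rw [aeval_derivative_minpoly_eq_prod (IsCyclotomicExtension.adjoin_primitive_root_eq_top hζ),
    map_prod, abs_prod, ← IsGalois.card_aut_eq_finrank K L, Nat.card_eq_fintype_card, ← card_univ,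
    ← card_erase_of_mem (mem_univ 1), ← prod_const]
  refine prod_congr rfl fun g hg => ?_
  rw [← hζ.autToPow_spec K g]
  exact abs_norm_sub_pow_val_eq_prime hp2 hζ (hunit (ne_of_mem_erase hg))

theorem absNorm_differentIdeal_dvd_pow (hp2 : p ≠ 2) (hp : ¬ p ∣ Module.finrank K L)
    (hζ : IsPrimitiveRoot ζ (p ^ (k + 1))) :
    Ideal.absNorm (differentIdeal (𝓞 K) (𝓞 L)) ∣ p ^ (Module.finrank K L - 1) := by
  have : IsCyclotomicExtension {p ^ (k + 1)} K L := isCyclotomicExtension_tower_top _ ℚ K L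
  set d : 𝓞 L := aeval hζ.toInteger (derivative (minpoly (𝓞 K) hζ.toInteger)) with hd
  have hmem : d ∈ differentIdeal (𝓞 K) (𝓞 L) := aeval_derivative_mem_differentIdeal (𝓞 K) K L _
    (IsCyclotomicExtension.adjoin_primitive_root_eq_top hζ)
  have hdL : algebraMap (𝓞 L) L d = aeval ζ (derivative (minpoly K ζ)) := by
    rw [hd, ← aeval_algebraMap_apply, ← aeval_map_algebraMap K, ← derivative_map,
      ← minpoly.isIntegrallyClosed_eq_field_fractions K L (Algebra.IsIntegral.isIntegral _)]
    rfl
  have hnorm : (Algebra.norm ℤ d).natAbs = p ^ (Module.finrank K L - 1) := by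
    have := abs_norm_aeval_derivative_minpoly K hp2 hp hζ
    rw [← hdL, ← Algebra.coe_norm_int, ← Int.cast_abs, Int.abs_eq_natAbs] at this
    exact_mod_cast this
  rw [← hnorm]
  exact Int.natCast_dvd.mp (Ideal.absNorm_dvd_norm_of_mem hmem)

theorem prime_pow_le_mul_natAbs_discr_pow (hp2 : p ≠ 2) (hp : ¬ p ∣ Module.finrank K L)
    (hζ : IsPrimitiveRoot ζ (p ^ (k + 1))) :
    p ^ (p ^ k * ((p - 1) * (k + 1) - 1)) ≤
      p ^ (Module.finrank K L - 1) * (discr K).natAbs ^ Module.finrank K L := by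
  have hd := natAbs_discr_eq_absNorm_differentIdeal_mul_natAbs_discr_pow K (𝓞 K) L (𝓞 L)
  rw [IsCyclotomicExtension.Rat.discr_prime_pow p (k + 1) L] at hd
  simp only [Int.natAbs_mul, Int.natAbs_pow, Int.natAbs_neg, Int.natAbs_one, one_pow, one_mul,
    Int.natAbs_natCast, Nat.add_sub_cancel] at hd
  rw [hd]
  exact Nat.mul_le_mul_right _ <| Nat.le_of_dvd (pow_pos (Nat.Prime.pos Fact.out) _) <|
    absNorm_differentIdeal_dvd_pow K hp2 hp hζ

end Discriminant

section EuclideanMinimum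

theorem sub_pow_le_mul_pow_of_prime_pow_le {p k u : ℕ} {D : ℝ} (hp : p.Prime) (hodd : Odd p)
    (hk : k ≠ 0) (hu : u ≤ p - 2)
    (hD : (p : ℝ) ^ (p ^ k * ((p - 1) * (k + 1) - 1)) ≤ (p : ℝ) ^ u * D ^ (u + 1)) :
    ((p : ℝ) ^ (k + 1) - u) ^ (3 * (p ^ k * (p - 1))) ≤
      (512 / 81) ^ (p ^ k * (p - 1)) * D ^ (3 * (u + 1)) := by
  have hp0 : (0 : ℝ) < p := by exact_mod_cast hp.pos
  have hexp : (k + 1) * (3 * (p ^ k * (p - 1))) =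
      p ^ k * ((p - 1) * (k + 1) - 1) * 3 + 3 * p ^ k := by
    obtain ⟨e, he⟩ : ∃ e, (p - 1) * (k + 1) = e + 1 :=
      Nat.exists_eq_succ_of_ne_zero (mul_ne_zero (Nat.sub_ne_zero_of_lt hp.one_lt) k.succ_ne_zero)
    rw [he, Nat.add_sub_cancel]
    linear_combination 3 * p ^ k * he
  refine le_of_mul_le_mul_right ?_ (pow_pos hp0 (3 * (u + p ^ k)))
  calc ((p : ℝ) ^ (k + 1) - u) ^ (3 * (p ^ k * (p - 1))) * (p : ℝ) ^ (3 * (u + p ^ k))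
      ≤ ((p : ℝ) ^ (k + 1)) ^ (3 * (p ^ k * (p - 1))) * (512 / 81) ^ (p ^ k * (p - 1)) :=
        sub_pow_mul_prime_pow_le hp hodd hk hu
    _ = ((p : ℝ) ^ (p ^ k * ((p - 1) * (k + 1) - 1))) ^ 3 * (p : ℝ) ^ (3 * p ^ k) *
          (512 / 81) ^ (p ^ k * (p - 1)) := by rw [← pow_mul, hexp, pow_add, pow_mul]
    _ ≤ ((p : ℝ) ^ u * D ^ (u + 1)) ^ 3 * (p : ℝ) ^ (3 * p ^ k) *
          (512 / 81) ^ (p ^ k * (p - 1)) := by gcongr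
    _ = (512 / 81) ^ (p ^ k * (p - 1)) * D ^ (3 * (u + 1)) * (p : ℝ) ^ (3 * (u + p ^ k)) := by
        rw [mul_pow, ← pow_mul, ← pow_mul, mul_comm u 3, mul_comm (u + 1) 3, mul_add 3 u (p ^ k),
          pow_add (p : ℝ)]
        ring

theorem le_rpow_pow_mul_sqrt {p k u n : ℕ} {T D : ℝ} (hp : p.Prime) (hodd : Odd p)
    (hk : k ≠ 0) (hu : u ≤ p - 2) (hn : n * (u + 1) = p ^ k * (p - 1)) (hD₀ : 0 ≤ D)
    (hD : (p : ℝ) ^ (p ^ k * ((p - 1) * (k + 1) - 1)) ≤ (p : ℝ) ^ u * D ^ (u + 1))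
    (hT : T ^ 2 ≤ (((p : ℝ) ^ (k + 1) - u) / 8) ^ n) :
    T ≤ ((3 : ℝ) ^ (-(2 : ℝ) / 3)) ^ n * √D := by
  have hconst : ((3 : ℝ) ^ (-(2 : ℝ) / 3)) ^ 6 = 81⁻¹ := by
    rw [← Real.rpow_mul_natCast (by norm_num), show (-(2 : ℝ) / 3 * (6 : ℕ)) = (-4 : ℤ) by norm_num,
      Real.rpow_intCast]
    norm_num
  refine le_of_pow_le_pow_left₀ (n := 6 * (u + 1)) (by simp) (by positivity) ?_
  calc T ^ (6 * (u + 1)) = (T ^ 2) ^ (3 * (u + 1)) := by rw [← pow_mul]; ring_nf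
    _ ≤ ((((p : ℝ) ^ (k + 1) - u) / 8) ^ n) ^ (3 * (u + 1)) := by gcongr
    _ = ((p : ℝ) ^ (k + 1) - u) ^ (3 * (p ^ k * (p - 1))) / 512 ^ (p ^ k * (p - 1)) := by
        rw [← pow_mul, mul_left_comm, hn, div_pow, pow_mul 8]
        norm_num
    _ ≤ (512 / 81) ^ (p ^ k * (p - 1)) * D ^ (3 * (u + 1)) / 512 ^ (p ^ k * (p - 1)) := by
        gcongr
        exact sub_pow_le_mul_pow_of_prime_pow_le hp hodd hk hu hD
    _ = 81⁻¹ ^ (p ^ k * (p - 1)) * D ^ (3 * (u + 1)) := by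
        rw [div_pow, inv_pow]
        field_simp
    _ = (((3 : ℝ) ^ (-(2 : ℝ) / 3)) ^ n * √D) ^ (6 * (u + 1)) := by
        rw [mul_pow, ← pow_mul, mul_left_comm, hn, pow_mul _ 6, hconst,
          show 6 * (u + 1) = 2 * (3 * (u + 1)) by ring, pow_mul √D, Real.sq_sqrt hD₀]

theorem exists_abs_norm_sub_le {p k : ℕ} [hp : Fact p.Prime] (hodd : Odd p) (hk : k ≠ 0)
    {K : Type*} (L : Type*) [Field K] [NumberField K] [Field L] [NumberField L] [Algebra K L]
    [IsCyclotomicExtension {p ^ (k + 1)} ℚ L] (h : ¬ p ∣ Module.finrank K L) (x : K) :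
    ∃ c : 𝓞 K, |(Algebra.norm ℚ (x - c) : ℝ)| ≤
      ((3 : ℝ) ^ (-(2 : ℝ) / 3)) ^ Module.finrank ℚ K * √|(discr K : ℝ)| := by
  have hp2 : p ≠ 2 := hodd.ne_two_of_dvd_nat dvd_rfl
  have hdegree : Module.finrank ℚ K * Module.finrank K L = p ^ k * (p - 1) := by
    rw [Module.finrank_mul_finrank, IsCyclotomicExtension.Rat.finrank (p ^ (k + 1)) L,
      Nat.totient_prime_pow_succ hp.out]
  have hle : Module.finrank K L ≤ p - 1 :=
    Nat.le_of_dvd (Nat.sub_pos_of_lt hp.out.one_lt) <|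
      ((hp.out.coprime_iff_not_dvd.mpr h).pow_left k).symm.dvd_of_dvd_mul_left ⟨_, by
        rw [← hdegree, mul_comm]⟩
  have hdiscr := prime_pow_le_mul_natAbs_discr_pow K hp2 h
    (IsCyclotomicExtension.zeta_spec (p ^ (k + 1)) ℚ L)
  obtain ⟨c, hc⟩ := exists_sq_abs_norm_sub_le (k := k) L h x
  obtain ⟨u, hu⟩ := Nat.exists_eq_succ_of_ne_zero (Module.finrank_pos (R := K) (M := L)).ne'
  rw [hu] at hdegree hle hdiscr hc
  refine ⟨c, le_rpow_pow_mul_sqrt hp.out hodd hk (by omega) hdegree (abs_nonneg _) ?_ ?_⟩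
  · rw [← Int.cast_abs, Int.abs_eq_natAbs]
    exact_mod_cast hdiscr
  · simpa using hc

theorem euclideanMinimum_le_of_forall_exists {K : Type*} [Field K] [NumberField K] {B : ℝ}
    (h : ∀ x : K, ∃ c : 𝓞 K, |(Algebra.norm ℚ (x - c) : ℝ)| ≤ B) : euclideanMinimum K ≤ B :=
  ciSup_le fun x =>
    have ⟨c, hc⟩ := h x
    ciInf_le_of_le ⟨0, Set.forall_mem_range.mpr fun _ => abs_nonneg _⟩ c hc

theorem isEmpty_algHom_of_hasConductor {K : Type*} [Field K] [NumberField K] {f m : ℕ+}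
    (hf : HasConductor K f) (hm : m < f) : IsEmpty (K →ₐ[ℚ] CyclotomicField m ℚ) :=
  not_nonempty_iff.mp fun h => (hf.2 m h).not_gt hm

end EuclideanMinimum

theorem euclideanMinimum_le_of_oddPrimePower_conductor_sq
    (p r : ℕ) (hp : p.Prime) (hodd : Odd p) (hr : 2 ≤ r)
    (K : Type*) [Field K] [NumberField K]
    (hcond : HasConductor K ⟨p ^ r, pow_pos hp.pos r⟩) :
    euclideanMinimum K ≤
      ((3 : ℝ) ^ (-(2 : ℝ) / 3)) ^ (Module.finrank ℚ K) *
        Real.sqrt |(NumberField.discr K : ℝ)| := by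
  have : Fact p.Prime := ⟨hp⟩
  obtain ⟨k, rfl⟩ : ∃ k, r = k + 1 := Nat.exists_eq_add_of_le' (one_le_two.trans hr)
  have hk : k ≠ 0 := by omega
  have hp2 : p ≠ 2 := hodd.ne_two_of_dvd_nat dvd_rfl
  have hmin : IsEmpty (K →ₐ[ℚ] CyclotomicField (p ^ k) ℚ) :=
    isEmpty_algHom_of_hasConductor (m := ⟨p ^ k, pow_pos hp.pos k⟩) hcond
      (Nat.pow_lt_pow_right hp.one_lt k.lt_succ_self)
  obtain ⟨⟨f⟩, -⟩ := hcond
  let : Algebra K (CyclotomicField (p ^ (k + 1)) ℚ) := f.toRingHom.toAlgebra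
  have := isCyclotomicExtension_cyclotomicField_rat (p ^ (k + 1))
  exact euclideanMinimum_le_of_forall_exists <| exists_abs_norm_sub_le hodd hk
    (CyclotomicField (p ^ (k + 1)) ℚ) (not_dvd_finrank_of_isEmpty_algHom hp2 hk hmin)
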